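/- arXiv:2502.00869 — 5 statements merged into one kernel-verified Lean document; each statement's English description precedes it below -/
import Mathlib

section
/- Let ξ be a real number with |ξ| < 1, and let f(u, v) = (1/(2π√(1−ξ²))) · exp(−(u² − 2ξuv + v²)/(2(1−ξ²))) be the standard bivariate normal density with correlation ξ. Then for all real numbers Ω₁, Ω₂, Φ₁, Φ₂: ∫_{ℝ²} sin(Ω₁ u + Φ₁) · sin(Ω₂ v + Φ₂) · f(u, v) du dv = (1/2) · e^{−(Ω₁² + Ω₂²)/2} · ( e^{Ω₁Ω₂ξ} cos(Φ₁ − Φ₂) − e^{−Ω₁Ω₂ξ} cos(Φ₁ + Φ₂) ). -/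
open Real MeasureTheory

lemma cos_gauss_one (s : ℝ) (hs : 0 < s) (a m β : ℝ) :
    ∫ x : ℝ, Real.cos (a * x + β) * Real.exp (-(x - m) ^ 2 / (2 * s)) =
      Real.sqrt (2 * π * s) * (Real.exp (-(a ^ 2 * s / 2)) * Real.cos (a * m + β)) := by
  have hsC : (s : ℂ) ≠ 0 := by exact_mod_cast hs.ne'
  have hb : ((-(1 / (2 * s)) : ℝ) : ℂ).re < 0 := by
    rw [Complex.ofReal_re]
    have : 0 < 1 / (2 * s) := by positivity
    linarith
  have h1 := integral_cexp_quadratic hb ((m : ℂ) / s + a * Complex.I)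
    (-(m : ℂ) ^ 2 / (2 * s) + β * Complex.I)
  have h2 := integrable_cexp_quadratic' hb ((m : ℂ) / s + a * Complex.I)
    (-(m : ℂ) ^ 2 / (2 * s) + β * Complex.I)
  have h3 := integral_re h2
  have key : ∀ r t : ℝ, (Complex.exp ((r : ℂ) + t * Complex.I)).re = Real.exp r * Real.cos t := by
    intro r t
    simp [Complex.exp_re]
  rw [h1] at h3
  have e1 : ∀ x : ℝ, RCLike.re (Complex.exp (((-(1 / (2 * s)) : ℝ) : ℂ) * (x : ℂ) ^ 2
      + ((m : ℂ) / s + a * Complex.I) * x + (-(m : ℂ) ^ 2 / (2 * s) + β * Complex.I)))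
      = Real.cos (a * x + β) * Real.exp (-(x - m) ^ 2 / (2 * s)) := by
    intro x
    have : ((-(1 / (2 * s)) : ℝ) : ℂ) * (x : ℂ) ^ 2
      + ((m : ℂ) / s + a * Complex.I) * x + (-(m : ℂ) ^ 2 / (2 * s) + β * Complex.I)
      = ((-(x - m) ^ 2 / (2 * s) : ℝ) : ℂ) + ((a * x + β : ℝ) : ℂ) * Complex.I := by
      push_cast
      field_simp
      ring
    rw [this, mul_comm (Real.cos _)]
    exact key _ _
  simp_rw [e1] at h3
  rw [h3]
  have e2 : (-(m : ℂ) ^ 2 / (2 * s) + β * Complex.I) - ((m : ℂ) / s + a * Complex.I) ^ 2 /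
      (4 * ((-(1 / (2 * s)) : ℝ) : ℂ)) =
      ((-(a ^ 2 * s / 2) : ℝ) : ℂ) + ((a * m + β : ℝ) : ℂ) * Complex.I := by
    push_cast
    field_simp
    ring_nf
    simp only [Complex.I_sq]
    ring
  have e3 : ((π : ℂ) / -((-(1 / (2 * s)) : ℝ) : ℂ)) ^ (1 / 2 : ℂ)
      = ((Real.sqrt (2 * π * s) : ℝ) : ℂ) := by
    have : ((π : ℂ) / -((-(1 / (2 * s)) : ℝ) : ℂ)) = ((2 * π * s : ℝ) : ℂ) := by
      push_cast
      field_simp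
    rw [this, Real.sqrt_eq_rpow, Complex.ofReal_cpow (by positivity)]
    push_cast
    rfl
  rw [e2, e3]
  change (_ : ℂ).re = _
  rw [Complex.re_ofReal_mul, key]

lemma gauss_exponent (ξ u v : ℝ) (hs : 0 < 1 - ξ ^ 2) :
    -(u ^ 2 - 2 * ξ * u * v + v ^ 2) / (2 * (1 - ξ ^ 2)) =
      -(u - 0) ^ 2 / (2 * 1) + -(v - ξ * u) ^ 2 / (2 * (1 - ξ ^ 2)) := by
  field_simp
  ring

lemma cos_gauss_integrable (ξ : ℝ) (hs : 0 < 1 - ξ ^ 2) (a b c : ℝ) :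
    Integrable (fun p : ℝ × ℝ => Real.cos (a * p.1 + b * p.2 + c) *
      Real.exp (-(p.1 ^ 2 - 2 * ξ * p.1 * p.2 + p.2 ^ 2) / (2 * (1 - ξ ^ 2)))) := by
  have hg : Integrable (fun x : ℝ => Real.exp (-(1 / 4) * x ^ 2)) :=
    integrable_exp_neg_mul_sq (by norm_num)
  refine (hg.mul_prod hg).mono' (Continuous.aestronglyMeasurable (by fun_prop)) ?_
  refine Filter.Eventually.of_forall fun p => ?_
  rw [norm_mul, Real.norm_eq_abs, Real.norm_eq_abs, Real.abs_exp, ← Real.exp_add]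
  refine (mul_le_of_le_one_left (Real.exp_nonneg _) (Real.abs_cos_le_one _)).trans ?_
  rw [Real.exp_le_exp, div_le_iff₀ (by positivity)]
  nlinarith [sq_nonneg (p.1 - ξ * p.2), sq_nonneg (p.2 - ξ * p.1)]

lemma cos_gauss_two (ξ : ℝ) (hs : 0 < 1 - ξ ^ 2) (a b c : ℝ) :
    ∫ p : ℝ × ℝ, Real.cos (a * p.1 + b * p.2 + c) *
      Real.exp (-(p.1 ^ 2 - 2 * ξ * p.1 * p.2 + p.2 ^ 2) / (2 * (1 - ξ ^ 2))) =
    2 * π * Real.sqrt (1 - ξ ^ 2) *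
      (Real.exp (-(a ^ 2 + b ^ 2) / 2 - a * b * ξ) * Real.cos c) := by
  have hi := cos_gauss_integrable ξ hs a b c
  rw [Measure.volume_eq_prod] at hi ⊢
  rw [integral_prod _ hi]
  have inner : ∀ u : ℝ, ∫ v : ℝ, Real.cos (a * u + b * v + c) *
      Real.exp (-(u ^ 2 - 2 * ξ * u * v + v ^ 2) / (2 * (1 - ξ ^ 2))) =
      (Real.sqrt (2 * π * (1 - ξ ^ 2)) * Real.exp (-(b ^ 2 * (1 - ξ ^ 2) / 2))) *
      (Real.cos ((a + b * ξ) * u + c) * Real.exp (-(u - 0) ^ 2 / (2 * 1))) := by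
    intro u
    have : ∀ v : ℝ, Real.cos (a * u + b * v + c) *
      Real.exp (-(u ^ 2 - 2 * ξ * u * v + v ^ 2) / (2 * (1 - ξ ^ 2))) =
      Real.exp (-(u - 0) ^ 2 / (2 * 1)) * (Real.cos (b * v + (a * u + c)) *
        Real.exp (-(v - ξ * u) ^ 2 / (2 * (1 - ξ ^ 2)))) := by
      intro v
      rw [gauss_exponent ξ u v hs, Real.exp_add,
        show b * v + (a * u + c) = a * u + b * v + c by ring]
      ring
    simp_rw [this]
    rw [integral_const_mul, cos_gauss_one _ hs,
      show b * (ξ * u) + (a * u + c) = (a + b * ξ) * u + c by ring]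
    ring
  simp_rw [inner]
  rw [integral_const_mul, cos_gauss_one 1 one_pos,
    show -(a ^ 2 + b ^ 2) / 2 - a * b * ξ =
      -(b ^ 2 * (1 - ξ ^ 2) / 2) + -((a + b * ξ) ^ 2 * 1 / 2) by ring, Real.exp_add,
    Real.sqrt_mul (by positivity), mul_one, mul_zero, zero_add]
  have h := Real.mul_self_sqrt (show 0 ≤ 2 * π by positivity)
  linear_combination (√(1 - ξ ^ 2) * Real.exp (-(b ^ 2 * (1 - ξ ^ 2) / 2)) *
    Real.exp (-((a + b * ξ) ^ 2 * 1 / 2)) * Real.cos c) * h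

/-- Let `|ξ| < 1` and let
`f (u, v) = (1/(2π√(1-ξ²))) exp (-(u² - 2ξuv + v²)/(2(1-ξ²)))` be the standard bivariate
normal density with correlation `ξ`.  Then for all real `Ω₁ Ω₂ Φ₁ Φ₂`,
`∫_{ℝ²} sin (Ω₁ u + Φ₁) sin (Ω₂ v + Φ₂) f (u, v) du dv
  = (1/2) e^{-(Ω₁² + Ω₂²)/2} (e^{Ω₁Ω₂ξ} cos (Φ₁ - Φ₂) - e^{-Ω₁Ω₂ξ} cos (Φ₁ + Φ₂))`. -/
theorem integral_sin_sin_bivariate_gaussian (ξ : ℝ) (hξ : |ξ| < 1) (Ω₁ Ω₂ Φ₁ Φ₂ : ℝ) :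
    ∫ p : ℝ × ℝ,
        Real.sin (Ω₁ * p.1 + Φ₁) * Real.sin (Ω₂ * p.2 + Φ₂) *
          (1 / (2 * π * Real.sqrt (1 - ξ ^ 2)) *
            Real.exp (-(p.1 ^ 2 - 2 * ξ * p.1 * p.2 + p.2 ^ 2) / (2 * (1 - ξ ^ 2)))) =
      (1 / 2) * Real.exp (-(Ω₁ ^ 2 + Ω₂ ^ 2) / 2) *
        (Real.exp (Ω₁ * Ω₂ * ξ) * Real.cos (Φ₁ - Φ₂) -
          Real.exp (-(Ω₁ * Ω₂ * ξ)) * Real.cos (Φ₁ + Φ₂)) := by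
  have hs : 0 < 1 - ξ ^ 2 := by
    have := (sq_lt_one_iff_abs_lt_one ξ).2 hξ
    linarith
  have hq : 0 < Real.sqrt (1 - ξ ^ 2) := Real.sqrt_pos.2 hs
  have e : ∀ p : ℝ × ℝ, Real.sin (Ω₁ * p.1 + Φ₁) * Real.sin (Ω₂ * p.2 + Φ₂) *
          (1 / (2 * π * Real.sqrt (1 - ξ ^ 2)) *
            Real.exp (-(p.1 ^ 2 - 2 * ξ * p.1 * p.2 + p.2 ^ 2) / (2 * (1 - ξ ^ 2)))) =
      (1 / 2 * (1 / (2 * π * Real.sqrt (1 - ξ ^ 2)))) *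
      (Real.cos (Ω₁ * p.1 + (-Ω₂) * p.2 + (Φ₁ - Φ₂)) *
      Real.exp (-(p.1 ^ 2 - 2 * ξ * p.1 * p.2 + p.2 ^ 2) / (2 * (1 - ξ ^ 2))) -
      Real.cos (Ω₁ * p.1 + Ω₂ * p.2 + (Φ₁ + Φ₂)) *
      Real.exp (-(p.1 ^ 2 - 2 * ξ * p.1 * p.2 + p.2 ^ 2) / (2 * (1 - ξ ^ 2)))) := by
    intro p
    rw [show Ω₁ * p.1 + (-Ω₂) * p.2 + (Φ₁ - Φ₂) = (Ω₁ * p.1 + Φ₁) - (Ω₂ * p.2 + Φ₂) by ring,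
      show Ω₁ * p.1 + Ω₂ * p.2 + (Φ₁ + Φ₂) = (Ω₁ * p.1 + Φ₁) + (Ω₂ * p.2 + Φ₂) by ring,
      Real.cos_sub, Real.cos_add (Ω₁ * p.1 + Φ₁) (Ω₂ * p.2 + Φ₂)]
    ring
  simp_rw [e]
  rw [integral_const_mul, integral_sub (cos_gauss_integrable ξ hs _ _ _)
    (cos_gauss_integrable ξ hs _ _ _), cos_gauss_two ξ hs, cos_gauss_two ξ hs,
    show -(Ω₁ ^ 2 + (-Ω₂) ^ 2) / 2 - Ω₁ * (-Ω₂) * ξ =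
      -(Ω₁ ^ 2 + Ω₂ ^ 2) / 2 + Ω₁ * Ω₂ * ξ by ring, Real.exp_add,
    sub_eq_add_neg (-(Ω₁ ^ 2 + Ω₂ ^ 2) / 2) (Ω₁ * Ω₂ * ξ), Real.exp_add]
  have hpi := Real.pi_pos
  field_simp
end

section
/- Let τ ≥ 1 and let C, Ω, Φ ∈ ℝ^τ. Define the STAF activation ρ*(x) = Σ_{i=1}^τ C_i sin(Ω_i x + Φ_i). Let ξ be a real number with |ξ| < 1 and let f(u, v) = (1/(2π√(1−ξ²))) exp(−(u² − 2ξuv + v²)/(2(1−ξ²))). Then the dual activation ρ̌*(ξ) := ∫_{ℝ²} ρ*(u) ρ*(v) f(u, v) du dv equals (1/2) Σ_{i=1}^τ Σ_{j=1}^τ C_i C_j e^{−(Ω_i² + Ω_j²)/2} ( e^{Ω_iΩ_jξ} cos(Φ_i − Φ_j) − e^{−Ω_iΩ_jξ} cos(Φ_i + Φ_j) ). -/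
open Real MeasureTheory

/-- The STAF activation with parameters `C Ω Φ : Fin τ → ℝ`:
`ρ*(x) = Σ_{i} C i * sin (Ω i * x + Φ i)`. -/
noncomputable def stafActivation {τ : ℕ} (C Ω Φ : Fin τ → ℝ) (x : ℝ) : ℝ :=
  ∑ i, C i * Real.sin (Ω i * x + Φ i)

/-- The bivariate normal density with correlation `ξ`. -/
noncomputable def bivDens (ξ : ℝ) (p : ℝ × ℝ) : ℝ :=
  1 / (2 * π * Real.sqrt (1 - ξ ^ 2)) *
    Real.exp (-(p.1 ^ 2 - 2 * ξ * p.1 * p.2 + p.2 ^ 2) / (2 * (1 - ξ ^ 2)))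

lemma one_sub_sq_pos' {ξ : ℝ} (hξ : |ξ| < 1) : 0 < 1 - ξ ^ 2 := by
  have := (sq_lt_one_iff_abs_lt_one ξ).2 hξ
  linarith

lemma bivDens_integrable {ξ : ℝ} (hξ : |ξ| < 1) : Integrable (bivDens ξ) := by
  have hs := one_sub_sq_pos' hξ
  have h1 : Integrable (fun x : ℝ => Real.exp (-(1/4) * x ^ 2)) :=
    integrable_exp_neg_mul_sq (by norm_num)
  have h2 := h1.mul_prod h1
  unfold bivDens
  refine Integrable.const_mul ?_ _
  refine Integrable.mono' h2 (by fun_prop) (Filter.Eventually.of_forall fun p => ?_)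
  rw [Real.norm_eq_abs, abs_of_pos (Real.exp_pos _), ← Real.exp_add, Real.exp_le_exp,
    div_le_iff₀ (by positivity)]
  obtain ⟨a, b⟩ := abs_lt.1 hξ
  have key : 0 ≤ (1 + ξ) * (1 - ξ) ^ 2 * (p.1 + p.2) ^ 2
      + (1 - ξ) * (1 + ξ) ^ 2 * (p.1 - p.2) ^ 2 := by
    have : 0 < 1 + ξ := by linarith
    have : 0 < 1 - ξ := by linarith
    positivity
  have k1 : 0 ≤ (1 - ξ) ^ 2 * (p.1 + p.2) ^ 2 := by positivity
  have k2 : 0 ≤ (1 + ξ) ^ 2 * (p.1 - p.2) ^ 2 := by positivity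
  nlinarith

lemma cpow_half_ofReal {x : ℝ} (hx : 0 ≤ x) :
    ((x : ℂ)) ^ (1 / 2 : ℂ) = ((Real.sqrt x : ℝ) : ℂ) := by
  rw [Real.sqrt_eq_rpow, Complex.ofReal_cpow hx]
  norm_num

lemma bivDens_charFun {ξ : ℝ} (hξ : |ξ| < 1) (a b c : ℝ) :
    ∫ p : ℝ × ℝ, Complex.exp (((a * p.1 + b * p.2 + c : ℝ) : ℂ) * Complex.I) * (bivDens ξ p : ℂ)
      = Complex.exp (((-(a ^ 2 + 2 * a * b * ξ + b ^ 2) / 2 : ℝ) : ℂ) + c * Complex.I) := by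
  have hs := one_sub_sq_pos' hξ
  have hint : Integrable (fun p : ℝ × ℝ =>
      Complex.exp (((a * p.1 + b * p.2 + c : ℝ) : ℂ) * Complex.I) * (bivDens ξ p : ℂ)) := by
    refine Integrable.bdd_mul (c := 1) (bivDens_integrable hξ).ofReal (by fun_prop) ?_
    exact Filter.Eventually.of_forall fun p => (Complex.norm_exp_ofReal_mul_I _).le
  rw [Measure.volume_eq_prod] at hint ⊢
  rw [integral_prod _ hint]
  obtain ⟨s, hsd⟩ : ∃ s, s = 1 - ξ ^ 2 := ⟨_, rfl⟩
  have hs' : 0 < s := hsd ▸ hs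
  have hsC : (s : ℂ) ≠ 0 := by exact_mod_cast hs'.ne'
  have hx2 : (ξ : ℂ) ^ 2 = 1 - s := by rw [hsd]; push_cast; ring
  have inner : ∀ u : ℝ, (∫ v : ℝ, Complex.exp (((a * u + b * v + c : ℝ) : ℂ) * Complex.I)
        * (bivDens ξ (u, v) : ℂ))
      = ((1 / (2 * π * Real.sqrt s) * Real.sqrt (2 * π * s) : ℝ) : ℂ) *
        Complex.exp ((-(1/2) : ℂ) * u ^ 2 + ((a + ξ * b) * Complex.I) * u
          + (c * Complex.I - b ^ 2 * s / 2)) := by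
    intro u
    have e : ∀ v : ℝ, Complex.exp (((a * u + b * v + c : ℝ) : ℂ) * Complex.I)
        * (bivDens ξ (u, v) : ℂ) = ((1 / (2 * π * Real.sqrt s) : ℝ) : ℂ) *
        Complex.exp (((-(1 / (2 * s)) : ℝ) : ℂ) * v ^ 2 + (ξ * u / s + b * Complex.I) * v
          + (-(u ^ 2) / (2 * s) + (a * u + c) * Complex.I)) := by
      intro v
      unfold bivDens
      simp only [← hsd]
      rw [Complex.ofReal_mul, Complex.ofReal_exp, mul_left_comm, ← Complex.exp_add]
      congr 2
      push_cast
      field_simp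
      ring
    simp_rw [e]
    rw [integral_const_mul, integral_cexp_quadratic (by
      rw [Complex.ofReal_re]; simp only [neg_lt_zero]; positivity)]
    have e2 : (π / -((-(1 / (2 * s)) : ℝ) : ℂ)) = ((2 * π * s : ℝ) : ℂ) := by
      push_cast; field_simp
    rw [e2, cpow_half_ofReal (by positivity), ← mul_assoc, ← Complex.ofReal_mul]
    congr 2
    push_cast
    field_simp
    ring_nf
    simp only [Complex.I_sq, hx2]
    ring
  simp_rw [inner]
  rw [integral_const_mul, integral_cexp_quadratic (by norm_num)]
  have e2 : (π / -(-(1 / 2) : ℂ)) = ((2 * π : ℝ) : ℂ) := by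
    push_cast; field_simp
  rw [e2, cpow_half_ofReal (by positivity), ← mul_assoc, ← Complex.ofReal_mul]
  have e3 : 1 / (2 * π * Real.sqrt s) * Real.sqrt (2 * π * s) * Real.sqrt (2 * π) = 1 := by
    rw [Real.sqrt_mul (by positivity) s]
    have h1 : Real.sqrt (2 * π) * Real.sqrt (2 * π) = 2 * π := Real.mul_self_sqrt (by positivity)
    have h2 : Real.sqrt s ≠ 0 := (Real.sqrt_pos.2 hs').ne'
    calc _ = (Real.sqrt (2 * π) * Real.sqrt (2 * π)) / (2 * π) * (Real.sqrt s / Real.sqrt s) := by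
          field_simp
      _ = 1 := by rw [h1, div_self h2, div_self (by positivity), one_mul]
  rw [e3, Complex.ofReal_one, one_mul]
  congr 1
  have : (s : ℂ) = 1 - ξ ^ 2 := by rw [hsd]; push_cast; ring
  rw [this, mul_pow, Complex.I_sq]
  push_cast
  ring

lemma bivDens_cos_integrable {ξ : ℝ} (hξ : |ξ| < 1) (a b c : ℝ) :
    Integrable (fun p : ℝ × ℝ => Real.cos (a * p.1 + b * p.2 + c) * bivDens ξ p) := by
  refine Integrable.bdd_mul (c := 1) (bivDens_integrable hξ) (by fun_prop) ?_
  exact Filter.Eventually.of_forall fun p => Real.abs_cos_le_one _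

lemma bivDens_cos {ξ : ℝ} (hξ : |ξ| < 1) (a b c : ℝ) :
    ∫ p : ℝ × ℝ, Real.cos (a * p.1 + b * p.2 + c) * bivDens ξ p
      = Real.exp (-(a ^ 2 + 2 * a * b * ξ + b ^ 2) / 2) * Real.cos c := by
  have h := congrArg Complex.re (bivDens_charFun hξ a b c)
  have hint : Integrable (fun p : ℝ × ℝ =>
      Complex.exp (((a * p.1 + b * p.2 + c : ℝ) : ℂ) * Complex.I) * (bivDens ξ p : ℂ)) := by
    refine Integrable.bdd_mul (c := 1) (bivDens_integrable hξ).ofReal (by fun_prop) ?_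
    exact Filter.Eventually.of_forall fun p => (Complex.norm_exp_ofReal_mul_I _).le
  have h2 := integral_re hint
  simp only [RCLike.re_to_complex] at h2
  rw [← h2] at h
  simp only [Complex.re_mul_ofReal, Complex.exp_ofReal_mul_I_re] at h
  rw [h, Complex.exp_add, ← Complex.ofReal_exp, Complex.re_ofReal_mul,
    Complex.exp_ofReal_mul_I_re]

/-- The dual activation of the STAF activation `ρ*` at correlation
`ξ ∈ (-1, 1)`, i.e. `∫_{ℝ²} ρ*(u) ρ*(v) f(u,v) du dv` against the standard bivariate normal
density `f` with correlation `ξ`, equals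
`(1/2) Σ_i Σ_j C_i C_j e^{-(Ω_i² + Ω_j²)/2}
  (e^{Ω_iΩ_jξ} cos (Φ_i - Φ_j) - e^{-Ω_iΩ_jξ} cos (Φ_i + Φ_j))`. -/
theorem staf_dual_activation (τ : ℕ) (hτ : 1 ≤ τ) (C Ω Φ : Fin τ → ℝ)
    (ξ : ℝ) (hξ : |ξ| < 1) :
    ∫ p : ℝ × ℝ,
        stafActivation C Ω Φ p.1 * stafActivation C Ω Φ p.2 *
          (1 / (2 * π * Real.sqrt (1 - ξ ^ 2)) *
            Real.exp (-(p.1 ^ 2 - 2 * ξ * p.1 * p.2 + p.2 ^ 2) / (2 * (1 - ξ ^ 2)))) =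
      (1 / 2) * ∑ i, ∑ j,
        C i * C j * Real.exp (-(Ω i ^ 2 + Ω j ^ 2) / 2) *
          (Real.exp (Ω i * Ω j * ξ) * Real.cos (Φ i - Φ j) -
            Real.exp (-(Ω i * Ω j * ξ)) * Real.cos (Φ i + Φ j)) := by
  have hdens : ∀ p : ℝ × ℝ, stafActivation C Ω Φ p.1 * stafActivation C Ω Φ p.2 *
      (1 / (2 * π * Real.sqrt (1 - ξ ^ 2)) *
        Real.exp (-(p.1 ^ 2 - 2 * ξ * p.1 * p.2 + p.2 ^ 2) / (2 * (1 - ξ ^ 2))))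
      = ∑ i, ∑ j, (C i * C j / 2) *
        (Real.cos (Ω i * p.1 + (-Ω j) * p.2 + (Φ i - Φ j)) * bivDens ξ p
          - Real.cos (Ω i * p.1 + Ω j * p.2 + (Φ i + Φ j)) * bivDens ξ p) := by
    intro p
    change _ * bivDens ξ p = _
    unfold stafActivation
    rw [Finset.sum_mul_sum, Finset.sum_mul]
    refine Finset.sum_congr rfl fun i _ => ?_
    rw [Finset.sum_mul]
    refine Finset.sum_congr rfl fun j _ => ?_
    have e1 : Ω i * p.1 + (-Ω j) * p.2 + (Φ i - Φ j)
        = (Ω i * p.1 + Φ i) - (Ω j * p.2 + Φ j) := by ring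
    have e2 : Ω i * p.1 + Ω j * p.2 + (Φ i + Φ j)
        = (Ω i * p.1 + Φ i) + (Ω j * p.2 + Φ j) := by ring
    rw [e1, e2, Real.cos_sub, Real.cos_add (Ω i * p.1 + Φ i) (Ω j * p.2 + Φ j)]
    ring
  simp_rw [hdens]
  have hI : ∀ i j, Integrable (fun p : ℝ × ℝ => (C i * C j / 2) *
        (Real.cos (Ω i * p.1 + (-Ω j) * p.2 + (Φ i - Φ j)) * bivDens ξ p
          - Real.cos (Ω i * p.1 + Ω j * p.2 + (Φ i + Φ j)) * bivDens ξ p)) := fun i j =>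
    ((bivDens_cos_integrable hξ _ _ _).sub (bivDens_cos_integrable hξ _ _ _)).const_mul _
  rw [integral_finsetSum _ fun i _ => integrable_finsetSum _ fun j _ => hI i j, Finset.mul_sum]
  refine Finset.sum_congr rfl fun i _ => ?_
  rw [integral_finsetSum _ fun j _ => hI i j, Finset.mul_sum]
  refine Finset.sum_congr rfl fun j _ => ?_
  rw [integral_const_mul, integral_sub (bivDens_cos_integrable hξ _ _ _)
    (bivDens_cos_integrable hξ _ _ _), bivDens_cos hξ, bivDens_cos hξ]
  have e1 : -(Ω i ^ 2 + 2 * Ω i * (-Ω j) * ξ + (-Ω j) ^ 2) / 2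
      = -(Ω i ^ 2 + Ω j ^ 2) / 2 + Ω i * Ω j * ξ := by ring
  have e2 : -(Ω i ^ 2 + 2 * Ω i * Ω j * ξ + Ω j ^ 2) / 2
      = -(Ω i ^ 2 + Ω j ^ 2) / 2 + -(Ω i * Ω j * ξ) := by ring
  rw [e1, e2, Real.exp_add, Real.exp_add]
  ring
end

section
/- Let τ, F₀, F₁, F₂ be positive natural numbers, let C, Ω, Φ ∈ ℝ^τ (viewed as τ×1 column matrices, with Cᵀ the 1×τ transpose), let W ∈ ℝ^{F₁×F₀}, W′ ∈ ℝ^{F₂×F₁}, z ∈ ℝ^{F₀}, and let ρ : ℝ → ℝ be any function. Write ρ applied entrywise to vectors, let 1_{F₁} ∈ ℝ^{F₁} be the all-ones vector, and define the trainable activation ρ*(x) = Σ_{m=1}^τ C_m ρ(Ω_m x + Φ_m) applied entrywise. Then (Cᵀ ⊗ W′) · ρ( (Ω ⊗ W) z + Φ ⊗ 1_{F₁} ) = W′ · ρ*( W z ), where ⊗ denotes the Kronecker product of matrices (and of a vector with a vector, yielding a vector indexed by pairs). -/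
open Matrix

/-- The trainable activation `ρ*(x) = Σ_m C_m ρ(Ω_m x + Φ_m)`. -/
noncomputable def trainableActivation {τ : ℕ} (C Ω Φ : Fin τ → ℝ) (ρ : ℝ → ℝ) (x : ℝ) : ℝ :=
  ∑ m, C m * ρ (Ω m * x + Φ m)

/-- Kronecker product `a ⊗ B` of a `τ×1` column vector `a` with a `p×q` matrix `B`
(the trivial width-1 column factor is collapsed): block entries `a_i • B`. -/
def colKronMat {τ p q : ℕ} (a : Fin τ → ℝ) (B : Matrix (Fin p) (Fin q) ℝ) :
    Matrix (Fin τ × Fin p) (Fin q) ℝ := fun i j => a i.1 * B i.2 j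

/-- Kronecker product `aᵀ ⊗ B` of a `1×τ` row vector `aᵀ` with a `p×q` matrix `B`
(the trivial height-1 row factor is collapsed): block entries `a_j • B`. -/
def rowKronMat {τ p q : ℕ} (a : Fin τ → ℝ) (B : Matrix (Fin p) (Fin q) ℝ) :
    Matrix (Fin p) (Fin τ × Fin q) ℝ := fun i j => a j.1 * B i j.2

/-- Kronecker product `a ⊗ v` of two column vectors, a vector indexed by pairs. -/
def vecKronVec {τ F : ℕ} (a : Fin τ → ℝ) (v : Fin F → ℝ) : Fin τ × Fin F → ℝ :=
  fun p => a p.1 * v p.2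

/-- `(Cᵀ ⊗ W′) · ρ((Ω ⊗ W) z + Φ ⊗ 1_{F₁}) = W′ · ρ*(W z)`,
with `ρ` applied entrywise and `1_{F₁}` the all-ones vector. -/
theorem kronecker_one_block (τ F₀ F₁ F₂ : ℕ)
    (hτ : 0 < τ) (h₀ : 0 < F₀) (h₁ : 0 < F₁) (h₂ : 0 < F₂)
    (C Ω Φ : Fin τ → ℝ)
    (W : Matrix (Fin F₁) (Fin F₀) ℝ) (W' : Matrix (Fin F₂) (Fin F₁) ℝ)
    (z : Fin F₀ → ℝ) (ρ : ℝ → ℝ) :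
    (rowKronMat C W').mulVec
        (fun p => ρ ((colKronMat Ω W).mulVec z p + vecKronVec Φ (fun _ => 1) p)) =
      W'.mulVec (fun j => trainableActivation C Ω Φ ρ (W.mulVec z j)) := by
  ext i
  simp only [Matrix.mulVec, dotProduct, rowKronMat, colKronMat, vecKronVec,
    trainableActivation, Fintype.sum_prod_type, Finset.mul_sum]
  rw [Finset.sum_comm]
  refine Finset.sum_congr rfl fun j _ => Finset.sum_congr rfl fun m _ => ?_
  simp only [mul_assoc, mul_one]
  ring
end

section
/- (Kronecker-equivalent network, two-layer case.) Let τ, F₀, F₁, F₂ be positive natural numbers, let C, Ω, Φ ∈ ℝ^τ, let W₁ ∈ ℝ^{F₁×F₀}, W₂ ∈ ℝ^{F₂×F₁}, z ∈ ℝ^{F₀}, and let ρ : ℝ → ℝ be any function applied entrywise. Define ρ*(x) = Σ_{m=1}^τ C_m ρ(Ω_m x + Φ_m) applied entrywise. Then the two-layer network with trainable activation equals the output of the Kronecker-equivalent network with base activation ρ: (Cᵀ ⊗ I_{F₂}) · ρ( ((Ω ⊗ Cᵀ) ⊗ W₂) · ρ( (Ω ⊗ W₁) z + Φ ⊗ 1_{F₁}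 ) + Φ ⊗ 1_{F₂} ) = ρ*( W₂ · ρ*( W₁ z ) ), where ⊗ is the Kronecker product, I_{F₂} is the F₂×F₂ identity, and 1_{F} denotes the all-ones vector in ℝ^{F} (so Φ ⊗ 1_F ∈ ℝ^{τF}). -/
open Matrix Kronecker

/-- Kronecker product `a ⊗ cᵀ` of a `τ×1` column vector with a `1×τ` row vector
(trivial factors collapsed): the `τ×τ` matrix with entries `a_i c_j`. -/
def colKronRow {τ : ℕ} (a c : Fin τ → ℝ) : Matrix (Fin τ) (Fin τ) ℝ :=
  fun i j => a i * c j

/-- **Kronecker-equivalent network, two-layer case.**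
`(Cᵀ ⊗ I_{F₂}) · ρ(((Ω ⊗ Cᵀ) ⊗ W₂) · ρ((Ω ⊗ W₁) z + Φ ⊗ 1_{F₁}) + Φ ⊗ 1_{F₂})
  = ρ*(W₂ · ρ*(W₁ z))`, with `ρ` applied entrywise; `⊗ₖ` is Mathlib's Kronecker
product of matrices. -/
theorem kronecker_equivalent_two_layer (τ F₀ F₁ F₂ : ℕ)
    (hτ : 0 < τ) (h₀ : 0 < F₀) (h₁ : 0 < F₁) (h₂ : 0 < F₂)
    (C Ω Φ : Fin τ → ℝ)
    (W₁ : Matrix (Fin F₁) (Fin F₀) ℝ) (W₂ : Matrix (Fin F₂) (Fin F₁) ℝ)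
    (z : Fin F₀ → ℝ) (ρ : ℝ → ℝ) :
    (rowKronMat C (1 : Matrix (Fin F₂) (Fin F₂) ℝ)).mulVec
        (fun p => ρ
          (((colKronRow Ω C ⊗ₖ W₂).mulVec
              (fun q => ρ ((colKronMat Ω W₁).mulVec z q + vecKronVec Φ (fun _ => 1) q))) p +
            vecKronVec Φ (fun _ => 1) p)) =
      fun i => trainableActivation C Ω Φ ρ
        (W₂.mulVec (fun j => trainableActivation C Ω Φ ρ (W₁.mulVec z j)) i) := by
  have inner : ∀ q : Fin τ × Fin F₁,
      (colKronMat Ω W₁).mulVec z q = Ω q.1 * W₁.mulVec z q.2 := by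
    intro q
    simp only [Matrix.mulVec, dotProduct, colKronMat, Finset.mul_sum, mul_assoc]
  have outer : ∀ (v : Fin τ × Fin F₁ → ℝ) (p : Fin τ × Fin F₂),
      (colKronRow Ω C ⊗ₖ W₂).mulVec v p
        = Ω p.1 * W₂.mulVec (fun j => ∑ m, C m * v (m, j)) p.2 := by
    intro v p
    simp only [Matrix.mulVec, dotProduct, colKronRow, Matrix.kroneckerMap_apply,
      Fintype.sum_prod_type, Finset.mul_sum]
    rw [Finset.sum_comm]
    refine Finset.sum_congr rfl fun j _ => Finset.sum_congr rfl fun m _ => ?_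
    ring
  have last : ∀ (v : Fin τ × Fin F₂ → ℝ) (i : Fin F₂),
      (rowKronMat C (1 : Matrix (Fin F₂) (Fin F₂) ℝ)).mulVec v i
        = ∑ m, C m * v (m, i) := by
    intro v i
    simp [Matrix.mulVec, dotProduct, rowKronMat, Fintype.sum_prod_type, Matrix.one_apply]
  funext i
  rw [last]
  simp only [outer, inner, vecKronVec, mul_one, trainableActivation]
end

section
/- Let A be a D×T real matrix such that some row of A has all entries rational. Then for every ε > 0 there exists a D×T real matrix Â with |Â_{i,j} − A_{i,j}| < ε for all indices i, j, such that the kernel of Â contains no nonzero rational vector: for every s ∈ ℚ^T, if Â · s = 0 (viewing s as a real vector) then s = 0. -/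
open Matrix

/-- If some row of the real `D×T` matrix `A` has all entries rational,
then for every `ε > 0` there is a matrix `Â` with `|Â_{ij} - A_{ij}| < ε` for all `i, j`
whose kernel contains no nonzero rational vector. -/
theorem perturb_kernel_rational_free (D T : ℕ) (A : Matrix (Fin D) (Fin T) ℝ)
    (hrow : ∃ r : Fin D, ∀ j : Fin T, ∃ q : ℚ, A r j = (q : ℝ)) :
    ∀ ε : ℝ, 0 < ε →
      ∃ Ahat : Matrix (Fin D) (Fin T) ℝ,
        (∀ i j, |Ahat i j - A i j| < ε) ∧
        ∀ s : Fin T → ℚ, Ahat.mulVec (fun j => (s j : ℝ)) = 0 → s = 0 := by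
  intro ε hε
  obtain ⟨r, hr⟩ := hrow
  choose q hq using hr
  have hc : {x : ℝ | IsAlgebraic ℚ x}.Countable := Algebraic.countable ℚ ℝ
  obtain ⟨x, hxt, hx0, hx1⟩ := (hc.dense_compl ℝ).exists_between
    (lt_min hε one_pos : (0:ℝ) < min ε 1)
  have hxt : Transcendental ℚ x := hxt
  have hxε : x < ε := lt_of_lt_of_le hx1 (min_le_left _ _)
  have hx1 : x < 1 := lt_of_lt_of_le hx1 (min_le_right _ _)
  refine ⟨fun i j => if i = r then A i j + x ^ ((j : ℕ) + 1) else A i j, ?_, ?_⟩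
  · intro i j
    by_cases h : i = r
    · simp only [h, if_true, add_sub_cancel_left]
      rw [abs_of_pos (pow_pos hx0 _)]
      exact lt_of_le_of_lt (pow_le_of_le_one hx0.le hx1.le (Nat.succ_ne_zero _)) hxε
    · simpa [h] using hε
  · intro s hs
    have h := congrFun hs r
    simp only [Matrix.mulVec, dotProduct, if_true, Pi.zero_apply, hq] at h
    let p : Polynomial ℚ := ∑ j : Fin T,
      (Polynomial.C (q j * s j) + Polynomial.C (s j) * Polynomial.X ^ ((j : ℕ) + 1))
    have hp : Polynomial.aeval x p = 0 := by
      rw [← h]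
      simp only [p, map_sum, map_add, map_mul, Polynomial.aeval_C, Polynomial.aeval_X, map_pow,
        eq_ratCast, Rat.cast_mul]
      exact Finset.sum_congr rfl fun j _ => by ring
    have hp0 : p = 0 := by
      by_contra hne
      exact hxt ⟨p, hne, hp⟩
    funext k
    have hk := congrArg (fun f => Polynomial.coeff f ((k : ℕ) + 1)) hp0
    simp only [p, Polynomial.finset_sum_coeff, Polynomial.coeff_add, Polynomial.coeff_C_succ,
      Polynomial.coeff_C_mul, Polynomial.coeff_X_pow, Polynomial.coeff_zero, zero_add,
      add_left_inj, Fin.val_inj, mul_ite, mul_one, mul_zero, Finset.sum_ite_eq,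
      Finset.mem_univ, if_true] at hk
    exact hk
end
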